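/- Assume Conditions (C) and set C = E[W³]/E[W]. Then for any sequence l = l_n with l = o(n), the weight at position l of the size-biased random order without replacement satisfies E[w_{v(l)}] = 1 + (l/ℓ_n)·(1 − C) + o((l + n^{2/3})/n) as n → ∞. -/

import Mathlib

open MeasureTheory Filter Asymptotics
open scoped Classical ENNReal Topology

noncomputable section

/-- `ℓ_n`: the total weight. -/
def ell (w : ∀ n : ℕ, Fin n → ℝ) (n : ℕ) : ℝ := ∑ i, w n i

/-- Conditions (C) on the triangular array of weights, relative to the law `μ` of the
limiting random variable `W`. -/
structure CondC (w : ∀ n : ℕ, Fin n → ℝ) (μ : Measure ℝ) : Prop where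
  isProb : IsProbabilityMeasure μ
  pos : ∀ᵐ x ∂μ, 0 < x
  w_pos : ∀ n, ∀ i : Fin n, 0 < w n i
  w_anti : ∀ n, ∀ i j : Fin n, i ≤ j → w n j ≤ w n i
  int3 : Integrable (fun x => x ^ 3) μ
  moment_eq : ∫ x, x ^ 2 ∂μ = ∫ x, x ∂μ
  weak : ∀ g : BoundedContinuousFunction ℝ ℝ,
    Tendsto (fun n : ℕ => (∑ i : Fin n, g (w n i)) / (n : ℝ)) atTop (𝓝 (∫ x, g x ∂μ))
  ell_asymp : (fun n : ℕ => ell w n - (∫ x, x ∂μ) * (n : ℝ)) =o[atTop]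
      fun n : ℕ => (n : ℝ) ^ ((2 : ℝ) / 3)
  sq_asymp : (fun n : ℕ => (∑ i : Fin n, (w n i) ^ 2) - (∫ x, x ^ 2 ∂μ) * (n : ℝ)) =o[atTop]
      fun n : ℕ => (n : ℝ) ^ ((2 : ℝ) / 3)
  cube_asymp : (fun n : ℕ => (∑ i : Fin n, (w n i) ^ 3) - (∫ x, x ^ 3 ∂μ) * (n : ℝ)) =o[atTop]
      fun _ : ℕ => (1 : ℝ)
  max_asymp : (fun n : ℕ => ⨆ i : Fin n, w n i) =o[atTop] fun n : ℕ => (n : ℝ) ^ ((1 : ℝ) / 3)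

/-- The constant `C = E[W³]/E[W]`. -/
def Cconst (μ : Measure ℝ) : ℝ := (∫ x, x ^ 3 ∂μ) / (∫ x, x ∂μ)

/-- The critical percolation parameter `p_f = (ℓ_n^{1/3} + f_n)/ℓ_n^{4/3}`. -/
def pf (w : ∀ n : ℕ, Fin n → ℝ) (f : ℕ → ℝ) (n : ℕ) : ℝ :=
  (ell w n ^ ((1 : ℝ) / 3) + f n) / ell w n ^ ((4 : ℝ) / 3)

/-- A Bernoulli-type measure on `Bool` with parameter `p`. -/
def bern (p : ℝ) : Measure Bool :=
  ENNReal.ofReal (1 - p) • Measure.dirac false + ENNReal.ofReal p • Measure.dirac true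

/-- The law of the independent edge indicators of the rank-1 inhomogeneous random graph
`G(W,p)`: the indicator attached to the (ordered) pair `(i,j)` is Bernoulli with success
probability `1 - exp (- w i * w j * p)`, all independent. -/
def graphMeasure (n : ℕ) (wn : Fin n → ℝ) (p : ℝ) : Measure (Fin n → Fin n → Bool) :=
  Measure.pi fun i => Measure.pi fun j => bern (1 - Real.exp (-(wn i * wn j * p)))

/-- The simple graph built from a sample of edge indicators: `i ~ j` iff `i ≠ j` and the
indicator of the pair `(min i j, max i j)` is `true`. -/
def graphOf {n : ℕ} (ω : Fin n → Fin n → Bool) : SimpleGraph (Fin n) :=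
  SimpleGraph.fromRel fun i j => ω (min i j) (max i j) = true

/-- The size (number of vertices) of a connected component. -/
def csize {n : ℕ} (G : SimpleGraph (Fin n)) (c : G.ConnectedComponent) : ℕ :=
  Nat.card {v : Fin n // G.connectedComponentMk v = c}

/-- The weight of a connected component: sum of the weights of its vertices. -/
def cweight {n : ℕ} (wn : Fin n → ℝ) (G : SimpleGraph (Fin n)) (c : G.ConnectedComponent) : ℝ :=
  ∑ v : Fin n, if G.connectedComponentMk v = c then wn v else 0

/-- The number of edges of a connected component. -/
def cedges {n : ℕ} (G : SimpleGraph (Fin n)) (c : G.ConnectedComponent) : ℕ :=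
  Nat.card {e : Sym2 (Fin n) // e ∈ G.edgeSet ∧ ∀ v ∈ e, G.connectedComponentMk v = c}

/-- The surplus (excess) of a connected component: edges − vertices + 1. -/
def csurplus {n : ℕ} (G : SimpleGraph (Fin n)) (c : G.ConnectedComponent) : ℤ :=
  (cedges G c : ℤ) - (csize G c : ℤ) + 1

/-- `c` is a largest connected component. -/
def isLargest {n : ℕ} (G : SimpleGraph (Fin n)) (c : G.ConnectedComponent) : Prop :=
  ∀ c', csize G c' ≤ csize G c

/-- The finset of connected components of a graph on `Fin n`. -/
def comps {n : ℕ} (G : SimpleGraph (Fin n)) : Finset G.ConnectedComponent :=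
  Finset.univ.image G.connectedComponentMk

/-- The law of the size-biased random order without replacement `(v(1),…,v(n))`, seen as a
measure on functions `Fin n → Fin n` (supported on permutations `σ`, with
`P(v = σ) = ∏_i w (σ i) / (ℓ_n − ∑_{k<i} w (σ k))`). -/
def sbMeasure (n : ℕ) (wn : Fin n → ℝ) : Measure (Fin n → Fin n) :=
  Measure.sum fun σ : Equiv.Perm (Fin n) =>
    ENNReal.ofReal (∏ i : Fin n,
        wn (σ i) / ((∑ k, wn k) - ∑ k ∈ Finset.univ.filter fun k => k < i, wn (σ k))) •
      Measure.dirac ⇑σ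

/-- The joint law of (edge indicators of `G(W,p)`, size-biased order), the two being
independent. -/
def expMeasure' (n : ℕ) (wn : Fin n → ℝ) (p : ℝ) :
    Measure ((Fin n → Fin n → Bool) × (Fin n → Fin n)) :=
  Measure.sum fun σ : Equiv.Perm (Fin n) =>
    ENNReal.ofReal (∏ i : Fin n,
        wn (σ i) / ((∑ k, wn k) - ∑ k ∈ Finset.univ.filter fun k => k < i, wn (σ k))) •
      (graphMeasure n wn p).map fun g => (g, ⇑σ)

/-- `sbW wn vord k` is `w_{v(k)}` (1-based), with the conventions `w_{v(0)} = 0` and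
`w_{v(k)} = 0` for `k > n`. -/
def sbW {n : ℕ} (wn : Fin n → ℝ) (vord : Fin n → Fin n) (k : ℕ) : ℝ :=
  if h : k - 1 < n then (if k = 0 then 0 else wn (vord ⟨k - 1, h⟩)) else 0

/-- The (0-based) first position, in the order `vord`, of a vertex of the component `c`;
this governs the order in which components are discovered by the breadth-first walk. -/
def firstIdx {n : ℕ} (G : SimpleGraph (Fin n)) (vord : Fin n → Fin n)
    (c : G.ConnectedComponent) : ℕ :=
  sInf {i : ℕ | ∃ h : i < n, G.connectedComponentMk (vord ⟨i, h⟩) = c}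

/-- The number of vertices explored strictly before the exploration of the component `c`
starts: components are explored in the order of their first appearance in `vord`, and the
exploration of `c` occupies the steps `startT c + 1, …, startT c + csize c`. -/
def startT {n : ℕ} (G : SimpleGraph (Fin n)) (vord : Fin n → Fin n)
    (c : G.ConnectedComponent) : ℕ :=
  ∑ v : Fin n, if firstIdx G vord (G.connectedComponentMk v) < firstIdx G vord c then 1 else 0

/-- The state (explored vertices, queue of discovered-but-unexplored vertices) of the
breadth-first walk after `i` steps; roots are chosen as the first undiscovered vertex in the
order `vord`, and children are queued in the order `vord`. -/
def bfwQueue {n : ℕ} (G : SimpleGraph (Fin n)) (vord : Fin n → Fin n) :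
    ℕ → Finset (Fin n) × List (Fin n)
  | 0 => (∅, [])
  | i + 1 =>
    let s := bfwQueue G vord i
    let q : List (Fin n) :=
      if s.2.isEmpty then ((List.ofFn vord).filter fun v => decide (v ∉ s.1)).take 1 else s.2
    match q with
    | [] => (s.1, [])
    | v :: rest =>
      (insert v s.1,
        rest ++ (List.ofFn vord).filter fun u => decide (G.Adj v u ∧ u ∉ s.1 ∧ u ∉ q))

/-- The reflected exploration process `L` of the breadth-first walk:
`L_0 = 1`, `L_{i+1} = max (L_i + c(i+1) - 1) 1`. -/
def Lproc {n : ℕ} (G : SimpleGraph (Fin n)) (vord : Fin n → Fin n) (i : ℕ) : ℕ :=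
  max (bfwQueue G vord i).2.length 1

/-- `discNbrs G vord i` is the number of neighbours of `v(i+1)` (0-based: `vord i`) outside
`{v(1),…,v(i+1)}`, i.e. the increment `X⁰_{i+1} + 1` of the process `L⁰`. -/
def discNbrs {n : ℕ} (G : SimpleGraph (Fin n)) (vord : Fin n → Fin n) (i : ℕ) : ℕ :=
  Nat.card {j : Fin n // (∃ h : i < n, G.Adj (vord ⟨i, h⟩) j) ∧
    ∀ k : ℕ, ∀ hk : k < n, k ≤ i → vord ⟨k, hk⟩ ≠ j}

/-- The process `L⁰`: `L⁰_0 = 1`, `L⁰_{i+1} = L⁰_i + X⁰_{i+1}` where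
`X⁰_{i+1} = ∑_{j ∉ {v(1),…,v(i+1)}} Y(v(i+1), j) − 1`. -/
def L0 {n : ℕ} (G : SimpleGraph (Fin n)) (vord : Fin n → Fin n) (m : ℕ) : ℤ :=
  1 - (m : ℤ) + ∑ i ∈ Finset.range m, (discNbrs G vord i : ℤ)

/-- The deterministic-drift process `L̃^h`, defined by
`L̃^h_m + m − 1 = ∑_{i=1}^m ∑_{k > i+h} (1 − exp (−w_{v(i)} w_{v(k)} p))`,
the inner sum being over positions `k ≤ n` in the size-biased order. -/
def Ltilde {n : ℕ} (wn : Fin n → ℝ) (p : ℝ) (vord : Fin n → Fin n) (h m : ℕ) : ℝ :=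
  1 - (m : ℝ) + ∑ i ∈ Finset.range m,
    if hi : i < n then
      ∑ k : Fin n, if i + h < (k : ℕ) then
        1 - Real.exp (-(wn (vord ⟨i, hi⟩) * wn (vord k) * p)) else 0
    else 0

/-- The law of the independent exponential clocks `(T_k)_{k ≤ n}`, `T_k` of rate `w_k / ℓ_n`. -/
def clocksMeasure (n : ℕ) (wn : Fin n → ℝ) : Measure (Fin n → ℝ) :=
  Measure.pi fun k => ProbabilityTheory.expMeasure (wn k / ∑ i, wn i)

/-- `N(x)`: the number of clocks that have rung by time `x`. -/
def Nclock {n : ℕ} (x : ℝ) (ω : Fin n → ℝ) : ℕ :=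
  ∑ k : Fin n, if ω k ≤ x then 1 else 0

/-- `X(x)`: the total weight of the clocks that have rung by time `x`. -/
def Xclock {n : ℕ} (wn : Fin n → ℝ) (x : ℝ) (ω : Fin n → ℝ) : ℝ :=
  ∑ k : Fin n, if ω k ≤ x then wn k else 0

/-- Conditions (C2) on a pair of sequences `(a, b)`, relative to the constant `Ā`. -/
structure Cond2 (w : ∀ n : ℕ, Fin n → ℝ) (Abar : ℝ) (a b : ℕ → ℝ) : Prop where
  exp_lt : ∀ᶠ n : ℕ in atTop,
    Real.exp (-(b n) ^ 2 / (Abar * (b n * (n : ℝ) ^ ((1 : ℝ) / 3) + a n))) < 1 / 4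
  a_top : Tendsto a atTop atTop
  b_top : Tendsto b atTop atTop
  a_lito : a =o[atTop] fun n : ℕ => (n : ℝ)
  b_bigO : b =O[atTop] a
  a_bigO : a =O[atTop] fun n => b n * ell w n ^ ((1 : ℝ) / 3)
  a_sq_bigO : (fun n => a n ^ 2) =O[atTop] fun n => b n * ell w n

/-- Conditions (C3) on a quadruple of sequences `(a, b, c, d)`. -/
structure Cond3 (w : ∀ n : ℕ, Fin n → ℝ) (Abar : ℝ) (a b c d : ℕ → ℝ) : Prop where
  sum_lito : (fun n => a n + c n) =o[atTop] fun n : ℕ => (n : ℝ)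
  diff_top : Tendsto (fun n => a n - b n) atTop atTop
  d_bigO : d =O[atTop] fun n => a n - b n
  c2 : Cond2 w Abar (fun n => Real.sqrt ((a n - b n) * (a n + c n))) d

/-- The list of component sizes, sorted in decreasing order. -/
def sizesList {n : ℕ} (G : SimpleGraph (Fin n)) : List ℕ :=
  (((comps G).val.map fun c => csize G c).sort (· ≤ ·)).reverse

/-- `kthSize G k` is the size of the `(k+1)`-st largest connected component of `G`
(`0` if there is no such component). -/
def kthSize {n : ℕ} (G : SimpleGraph (Fin n)) (k : ℕ) : ℕ := (sizesList G).getD k 0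

end

/-!
Let `S` and `Q` be the sums of the weights and of their squares over the first `k` draws. Given
these draws, the next one is a size-biased pick among the remaining items, whence
`E[w_{v(k+1)}] = E[(∑ w² - Q) / (ℓ - S)]`. Convergence of the third moments along with the laws
makes the cubes of the weights asymptotically uniformly integrable, so `k = o(n)` draws carry only
`o(n)` of the sums of the weights, of their squares and of their cubes. To leading order, then,
`E[w_{v(i)}] ≈ ∑ w² / ℓ ≈ r` and `E[w_{v(i)}²] ≈ ∑ w³ / ℓ ≈ C`, with `r = 1` under Conditions (C);
summing over `i ≤ k` gives `E[S] ≈ r k` and `E[Q] ≈ C k`. Feeding this back into the linearization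
`r + (∑ w² - r ℓ) / ℓ + (r S - Q) / ℓ` of the ratio yields the correction `(r² - C) k / ℓ`.
-/

/-! ### The law of the size-biased order -/

section SizeBiasedOrder

variable {n : ℕ}

/-- The probability `P(v = σ)` of a permutation under the size-biased order: the `i`-th draw takes
`σ i` with probability proportional to its weight among the items not drawn before. -/
noncomputable def sbProb (w : Fin n → ℝ) (σ : Equiv.Perm (Fin n)) : ℝ :=
  ∏ i, w (σ i) / ∑ k ∈ Finset.Ici i, w (σ k)

/-- The family `f` restricted to the items that remain once `p` has been drawn first, relabelled
by `Fin n` in the way `Equiv.Perm.decomposeFin` does it. -/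
def afterDraw {α : Type*} (p : Fin (n + 1)) (f : Fin (n + 1) → α) (i : Fin n) : α :=
  f (Equiv.swap 0 p i.succ)

/-- The sum `f (v 0) + ⋯ + f (v (k - 1))` over the draws before position `k`. -/
def headSum (f : Fin n → ℝ) (v : Fin n → Fin n) (k : Fin n) : ℝ :=
  ∑ i ∈ Finset.Iio k, f (v i)

theorem sum_Ici_zero (f : Fin (n + 1) → ℝ) : ∑ k ∈ Finset.Ici 0, f k = ∑ k, f k := by
  rw [← Finset.Ici_bot, bot_eq_zero]

theorem sum_Ici_succ (f : Fin (n + 1) → ℝ) (i : Fin n) :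
    ∑ k ∈ Finset.Ici i.succ, f k = ∑ k ∈ Finset.Ici i, f k.succ := by
  rw [← Fin.map_succEmb_Ici, Finset.sum_map, Fin.coe_succEmb]

theorem sum_Ici_perm (f : Fin n → ℝ) (σ : Equiv.Perm (Fin n)) (k : Fin n) :
    ∑ i ∈ Finset.Ici k, f (σ i) = ∑ i, f i - headSum f σ k := by
  have hcompl : (Finset.Iio k)ᶜ = Finset.Ici k := by ext; simp
  rw [← Equiv.sum_comp σ f, headSum, ← Finset.sum_compl_add_sum (Finset.Iio k), hcompl,
    add_sub_cancel_right]

theorem headSum_nonneg {f : Fin n → ℝ} (hf : ∀ i, 0 ≤ f i) (v : Fin n → Fin n) (k : Fin n) :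
    0 ≤ headSum f v k :=
  Finset.sum_nonneg fun _ _ => hf _

theorem sbProb_nonneg {w : Fin n → ℝ} (hw : ∀ i, 0 < w i) (σ : Equiv.Perm (Fin n)) :
    0 ≤ sbProb w σ :=
  Finset.prod_nonneg fun _ _ => div_nonneg (hw _).le (Finset.sum_nonneg fun _ _ => (hw _).le)

theorem sbProb_decomposeFin_symm (w : Fin (n + 1) → ℝ) (p : Fin (n + 1))
    (e : Equiv.Perm (Fin n)) :
    sbProb w (Equiv.Perm.decomposeFin.symm (p, e)) =
      w p / (∑ k, w k) * sbProb (afterDraw p w) e := by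
  rw [sbProb, Fin.prod_univ_succ, sum_Ici_zero,
    Equiv.sum_comp (Equiv.Perm.decomposeFin.symm (p, e)) w]
  simp [sbProb, sum_Ici_succ, afterDraw]

theorem sum_sbProb_mul_succ (w : Fin (n + 1) → ℝ) (F : Equiv.Perm (Fin (n + 1)) → ℝ) :
    ∑ σ, sbProb w σ * F σ = ∑ p, w p / (∑ k, w k) *
      ∑ e, sbProb (afterDraw p w) e * F (Equiv.Perm.decomposeFin.symm (p, e)) := by
  rw [← Equiv.sum_comp Equiv.Perm.decomposeFin.symm, Fintype.sum_prod_type]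
  simp_rw [sbProb_decomposeFin_symm, mul_assoc, Finset.mul_sum]

theorem sum_sbProb {w : Fin n → ℝ} (hw : ∀ i, 0 < w i) : ∑ σ, sbProb w σ = 1 := by
  induction n with
  | zero => simp [sbProb]
  | succ n ih =>
    have hsucc := sum_sbProb_mul_succ w fun _ => 1
    have hrest (p : Fin (n + 1)) : ∑ e, sbProb (afterDraw p w) e = 1 := ih fun _ => hw _
    simp_rw [mul_one, hrest, mul_one, ← Finset.sum_div] at hsucc
    rw [hsucc, div_self (Finset.sum_pos (fun i _ => hw i) Finset.univ_nonempty).ne']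

theorem sum_sbProb_mul_apply_zero {w : Fin (n + 1) → ℝ} (hw : ∀ i, 0 < w i)
    (g : Fin (n + 1) → ℝ) :
    ∑ σ, sbProb w σ * g (σ 0) = (∑ i, w i * g i) / ∑ i, w i := by
  have hrest (p : Fin (n + 1)) : ∑ e, sbProb (afterDraw p w) e = 1 := sum_sbProb fun _ => hw _
  simp_rw [sum_sbProb_mul_succ, Equiv.Perm.decomposeFin_symm_apply_zero, ← Finset.sum_mul, hrest,
    one_mul, div_mul_eq_mul_div, Finset.sum_div]

/-- Given the first `k` draws, the next one is a size-biased pick among the remaining items. -/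
theorem sum_sbProb_mul_apply {w : Fin n → ℝ} (hw : ∀ i, 0 < w i) (g : Fin n → ℝ) (k : Fin n) :
    ∑ σ, sbProb w σ * g (σ k) = ∑ σ, sbProb w σ *
      ((∑ i ∈ Finset.Ici k, w (σ i) * g (σ i)) / ∑ i ∈ Finset.Ici k, w (σ i)) := by
  induction n with
  | zero => exact k.elim0
  | succ n ih =>
    cases k using Fin.cases with
    | zero =>
      simp_rw [sum_Ici_zero, fun σ : Equiv.Perm _ => Equiv.sum_comp σ fun i => w i * g i,
        fun σ : Equiv.Perm _ => Equiv.sum_comp σ w, ← Finset.sum_mul, sum_sbProb hw, one_mul,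
        sum_sbProb_mul_apply_zero hw]
    | succ k =>
      simp_rw [sum_sbProb_mul_succ, sum_Ici_succ, Equiv.Perm.decomposeFin_symm_apply_succ]
      refine Finset.sum_congr rfl fun p _ => ?_
      congr 1
      exact ih (fun _ => hw _) (afterDraw p g) k

theorem sbMeasure_eq_sum_sbProb (w : Fin n → ℝ) :
    sbMeasure n w = ∑ σ : Equiv.Perm (Fin n), ENNReal.ofReal (sbProb w σ) • Measure.dirac ⇑σ := by
  have hIio (i : Fin n) : Finset.univ.filter (· < i) = Finset.Iio i := by ext; simp
  simp_rw [sbMeasure, Measure.sum_fintype, hIio, sbProb, sum_Ici_perm, headSum]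

theorem integral_sbMeasure {w : Fin n → ℝ} (hw : ∀ i, 0 < w i) (F : (Fin n → Fin n) → ℝ) :
    ∫ v, F v ∂sbMeasure n w = ∑ σ : Equiv.Perm (Fin n), sbProb w σ * F σ := by
  rw [sbMeasure_eq_sum_sbProb, integral_finsetSum_measure fun σ _ =>
    Integrable.of_finite.smul_measure ENNReal.ofReal_ne_top]
  simp_rw [integral_smul_measure, integral_dirac, ENNReal.toReal_ofReal (sbProb_nonneg hw _),
    smul_eq_mul]

theorem isProbabilityMeasure_sbMeasure {w : Fin n → ℝ} (hw : ∀ i, 0 < w i) :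
    IsProbabilityMeasure (sbMeasure n w) := by
  constructor
  simp_rw [sbMeasure_eq_sum_sbProb, Measure.finsetSum_apply, Measure.smul_apply, measure_univ,
    smul_eq_mul, mul_one]
  rw [← ENNReal.ofReal_sum_of_nonneg fun σ _ => sbProb_nonneg hw σ, sum_sbProb hw,
    ENNReal.ofReal_one]

theorem ae_sbMeasure_of_forall_perm (w : Fin n → ℝ) {P : (Fin n → Fin n) → Prop}
    (hP : ∀ σ : Equiv.Perm (Fin n), P σ) : ∀ᵐ v ∂sbMeasure n w, P v := by
  rw [sbMeasure_eq_sum_sbProb, ae_iff, Measure.finsetSum_apply]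
  refine Finset.sum_eq_zero fun σ _ => ?_
  simp [hP σ]

theorem integral_apply_sbMeasure {w : Fin n → ℝ} (hw : ∀ i, 0 < w i) (g : Fin n → ℝ)
    (k : Fin n) :
    ∫ v, g (v k) ∂sbMeasure n w = ∫ v, (∑ i, w i * g i - headSum (fun i => w i * g i) v k) /
      (∑ i, w i - headSum w v k) ∂sbMeasure n w := by
  simp_rw [integral_sbMeasure hw, sum_sbProb_mul_apply hw, ← sum_Ici_perm]

theorem sbW_eq {w : Fin n → ℝ} {k : ℕ} (hk : k - 1 < n) (hk0 : k ≠ 0) (v : Fin n → Fin n) :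
    sbW w v k = w (v ⟨k - 1, hk⟩) := by
  rw [sbW, dif_pos hk, if_neg hk0]

end SizeBiasedOrder

/-! ### Sums over small subsets -/

section SubsetSums

/-- Every subset of at most `k` indices has absolute `f`-sum at most `ε`. The bound `k` is real so
that no rounding is needed when it is a proportion of the number of indices. -/
def SubsetSumsLE {ι : Type*} (f : ι → ℝ) (k ε : ℝ) : Prop :=
  ∀ A : Finset ι, (A.card : ℝ) ≤ k → ∑ i ∈ A, |f i| ≤ ε

/-- Asymptotic uniform integrability of the rows of a triangular array under the uniform
probability measures, in the form of absolute continuity: few indices carry little mass. -/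
def AsympUnifIntegrable (f : ∀ n : ℕ, Fin n → ℝ) : Prop :=
  ∀ ε > 0, ∃ δ > 0, ∀ᶠ n : ℕ in atTop, SubsetSumsLE (f n) (δ * n) (ε * n)

theorem SubsetSumsLE.mono {ι : Type*} {f : ι → ℝ} {k k' ε ε' : ℝ} (h : SubsetSumsLE f k ε)
    (hk : k' ≤ k) (hε : ε ≤ ε') : SubsetSumsLE f k' ε' :=
  fun A hA => (h A (hA.trans hk)).trans hε

theorem SubsetSumsLE.ae_abs_headSum_le {n : ℕ} {f : Fin n → ℝ} {ε : ℝ} {k : Fin n}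
    (h : SubsetSumsLE f k ε) (w : Fin n → ℝ) : ∀ᵐ v ∂sbMeasure n w, |headSum f v k| ≤ ε := by
  refine ae_sbMeasure_of_forall_perm w fun σ => ?_
  have hA := h ((Finset.Iio k).map σ.toEmbedding) (by simp)
  rw [Finset.sum_map] at hA
  exact (Finset.abs_sum_le_sum_abs _ _).trans hA

theorem AsympUnifIntegrable.of_abs_le_one_add {f g : ∀ n : ℕ, Fin n → ℝ}
    (hg : AsympUnifIntegrable g) (hfg : ∀ n i, |f n i| ≤ 1 + |g n i|) :
    AsympUnifIntegrable f := by
  intro ε hε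
  obtain ⟨δ, hδ, hgδ⟩ := hg (ε / 2) (half_pos hε)
  refine ⟨min δ (ε / 2), lt_min hδ (half_pos hε), hgδ.mono fun n hn A hA => ?_⟩
  have hcard : (A.card : ℝ) ≤ δ * n := hA.trans (by gcongr; exact min_le_left _ _)
  have hcard' : (A.card : ℝ) ≤ ε / 2 * n := hA.trans (by gcongr; exact min_le_right _ _)
  calc ∑ i ∈ A, |f n i| ≤ ∑ i ∈ A, (1 + |g n i|) := Finset.sum_le_sum fun i _ => hfg n i
    _ = A.card + ∑ i ∈ A, |g n i| := by simp [Finset.sum_add_distrib]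
    _ ≤ ε / 2 * n + ε / 2 * n := add_le_add hcard' (hn A hcard)
    _ = ε * n := by ring

theorem AsympUnifIntegrable.eventually_subsetSumsLE {f : ∀ n : ℕ, Fin n → ℝ}
    (hf : AsympUnifIntegrable f) {k b : ℕ → ℝ} (hk : k =o[atTop] fun n : ℕ => (n : ℝ))
    (hb : (fun n : ℕ => (n : ℝ)) =O[atTop] b) {ε : ℝ} (hε : 0 < ε) :
    ∀ᶠ n in atTop, SubsetSumsLE (f n) (k n) (ε * |b n|) := by
  obtain ⟨K, hK, hbK⟩ := hb.exists_pos
  obtain ⟨δ, hδ, hfδ⟩ := hf (ε / K) (by positivity)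
  filter_upwards [hfδ, hk.bound hδ, hbK.bound] with n hfn hkn hbn
  simp only [Real.norm_eq_abs, Nat.abs_cast] at hkn hbn
  refine hfn.mono ((le_abs_self _).trans hkn) ?_
  calc ε / K * n ≤ ε / K * (K * |b n|) := by gcongr
    _ = ε * |b n| := by field_simp

theorem pow_le_one_add_pow {x : ℝ} (hx : 0 ≤ x) {p q : ℕ} (hpq : p ≤ q) : x ^ p ≤ 1 + x ^ q := by
  rcases le_total x 1 with h | h
  · linarith [pow_le_one₀ hx h (n := p), pow_nonneg hx q]
  · linarith [pow_le_pow_right₀ h hpq]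

theorem AsympUnifIntegrable.pow_mono {w : ∀ n : ℕ, Fin n → ℝ} {p q : ℕ}
    (hq : AsympUnifIntegrable fun n i => w n i ^ q) (hpq : p ≤ q) :
    AsympUnifIntegrable fun n i => w n i ^ p :=
  hq.of_abs_le_one_add fun n i => by
    simpa only [abs_pow] using pow_le_one_add_pow (abs_nonneg (w n i)) hpq

end SubsetSums

section WeakConvergence

variable {X : Type*} [TopologicalSpace X]

/-- The truncation `x ↦ min (h x) M` of a nonnegative continuous function, as a bounded continuous
test function. -/
noncomputable def truncateAt {h : X → ℝ} (hc : Continuous h) (h0 : ∀ x, 0 ≤ h x) (M : ℕ) :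
    BoundedContinuousFunction X ℝ :=
  .ofNormedAddCommGroup (fun x => min (h x) M) (by fun_prop) M fun x => by
    rw [Real.norm_of_nonneg (le_min (h0 x) M.cast_nonneg)]
    exact min_le_right _ _

theorem truncateAt_apply {h : X → ℝ} (hc : Continuous h) (h0 : ∀ x, 0 ≤ h x) (M : ℕ) (x : X) :
    truncateAt hc h0 M x = min (h x) M := rfl

variable [MeasurableSpace X] [OpensMeasurableSpace X] {μ : Measure X}

theorem tendsto_integral_truncateAt {h : X → ℝ} (hc : Continuous h) (h0 : ∀ x, 0 ≤ h x)
    (hint : Integrable h μ) :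
    Tendsto (fun M : ℕ => ∫ x, truncateAt hc h0 M x ∂μ) atTop (𝓝 (∫ x, h x ∂μ)) := by
  refine tendsto_integral_of_dominated_convergence h
    (fun M => (truncateAt hc h0 M).continuous.aestronglyMeasurable) hint
    (fun M => .of_forall fun x => ?_) (.of_forall fun x => ?_)
  · rw [truncateAt_apply, Real.norm_of_nonneg (le_min (h0 x) M.cast_nonneg)]
    exact min_le_left _ _
  · refine tendsto_const_nhds.congr' ?_
    filter_upwards [eventually_ge_atTop ⌈h x⌉₊] with M hM
    rw [truncateAt_apply, min_eq_left (Nat.ceil_le.mp hM)]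

/-- If the means of `h` converge along with the laws, no mass of `h` escapes to infinity: up to
`ε n`, the sum of `h` is the sum of a truncation of `h`, to which a small subset contributes
little. -/
theorem asympUnifIntegrable_of_tendsto {w : ∀ n : ℕ, Fin n → X} {h : X → ℝ} (hc : Continuous h)
    (h0 : ∀ x, 0 ≤ h x) (hint : Integrable h μ)
    (hweak : ∀ g : BoundedContinuousFunction X ℝ,
      Tendsto (fun n : ℕ => (∑ i, g (w n i)) / (n : ℝ)) atTop (𝓝 (∫ x, g x ∂μ)))
    (hmean : Tendsto (fun n : ℕ => (∑ i, h (w n i)) / (n : ℝ)) atTop (𝓝 (∫ x, h x ∂μ))) :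
    AsympUnifIntegrable fun n i => h (w n i) := by
  intro ε hε
  obtain ⟨M, hM⟩ := ((tendsto_integral_truncateAt hc h0 hint).eventually_const_lt
    (sub_lt_self _ (half_pos hε))).exists
  refine ⟨ε / (2 * (M + 1)), by positivity, ?_⟩
  filter_upwards [(hmean.sub (hweak (truncateAt hc h0 M))).eventually_lt_const (sub_lt_comm.mp hM),
    eventually_gt_atTop 0] with n hn hn0 A hA
  have hn0' : (0 : ℝ) < n := Nat.cast_pos.mpr hn0
  have hexcess : ∑ i ∈ A, (h (w n i) - truncateAt hc h0 M (w n i)) ≤ ε / 2 * n := by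
    rw [← sub_div, div_lt_iff₀ hn0', ← Finset.sum_sub_distrib] at hn
    exact (Finset.sum_le_univ_sum_of_nonneg fun i => sub_nonneg.mpr (min_le_left _ _)).trans hn.le
  have htrunc : ∑ i ∈ A, truncateAt hc h0 M (w n i) ≤ A.card * M := by
    rw [← nsmul_eq_mul]
    exact Finset.sum_le_card_nsmul A _ _ fun i _ => min_le_right _ _
  calc ∑ i ∈ A, |h (w n i)|
      = ∑ i ∈ A, truncateAt hc h0 M (w n i)
        + ∑ i ∈ A, (h (w n i) - truncateAt hc h0 M (w n i)) := by
        simp_rw [← Finset.sum_add_distrib, add_sub_cancel, abs_of_nonneg (h0 _)]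
    _ ≤ ε / (2 * (M + 1)) * n * (M + 1) + ε / 2 * n := by
        refine add_le_add (htrunc.trans ?_) hexcess
        gcongr
        linarith
    _ = ε * n := by field_simp; ring

end WeakConvergence

/-! ### Mean weight at a fixed position -/

section SizeBiasedRatio

variable {ℓ S G H c δ : ℝ}

theorem half_le_sub_of_abs_le (hδ : δ ≤ 1 / 2) (hℓ : 0 < ℓ) (hS : |S| ≤ δ * ℓ) :
    ℓ / 2 ≤ ℓ - S := by
  nlinarith [(abs_le.mp hS).2]

theorem abs_ratio_sub_le (hδ : δ ≤ 1 / 2) (hℓ : 0 < ℓ) (hS : |S| ≤ δ * ℓ) (hH : |H| ≤ δ * ℓ)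
    (hG : |G - c * ℓ| ≤ δ * ℓ) : |(G - H) / (ℓ - S) - c| ≤ (4 + 2 * |c|) * δ := by
  have hhalf := half_le_sub_of_abs_le hδ hℓ hS
  have hpos : 0 < ℓ - S := by linarith
  have hδ0 : 0 ≤ δ := nonneg_of_mul_nonneg_left ((abs_nonneg S).trans hS) hℓ
  rw [div_sub' hpos.ne', abs_div, abs_of_pos hpos, div_le_iff₀ hpos]
  calc |G - H - (ℓ - S) * c| = |G - c * ℓ - H + c * S| := by ring_nf
    _ ≤ |G - c * ℓ| + |H| + |c| * |S| := by
        rw [← abs_mul]; exact (abs_add_le _ _).trans (add_le_add_left (abs_sub _ _) _)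
    _ ≤ δ * ℓ + δ * ℓ + |c| * (δ * ℓ) := by gcongr
    _ = (4 + 2 * |c|) * δ * (ℓ / 2) := by ring
    _ ≤ (4 + 2 * |c|) * δ * (ℓ - S) := by gcongr

theorem abs_ratio_sub_linearization_le (hδ : δ ≤ 1 / 2) (hℓ : 0 < ℓ) (hS : |S| ≤ δ * ℓ) :
    |ℓ * ((G - H) / (ℓ - S) - c) - (G - c * ℓ + c * S - H)| ≤
      2 * δ * (|G - c * ℓ| + |c| * |S| + |H|) := by
  have hhalf := half_le_sub_of_abs_le hδ hℓ hS
  have hpos : 0 < ℓ - S := by linarith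
  have hδ0 : 0 ≤ δ := nonneg_of_mul_nonneg_left ((abs_nonneg S).trans hS) hℓ
  have hratio : |S / (ℓ - S)| ≤ 2 * δ := by
    rw [abs_div, abs_of_pos hpos, div_le_iff₀ hpos]
    calc |S| ≤ 2 * δ * (ℓ / 2) := hS.trans_eq (by ring)
      _ ≤ 2 * δ * (ℓ - S) := by gcongr
  have hnum : |G - c * ℓ + c * S - H| ≤ |G - c * ℓ| + |c| * |S| + |H| := by
    rw [← abs_mul]; exact (abs_sub _ _).trans (add_le_add_left (abs_add_le _ _) _)
  calc |ℓ * ((G - H) / (ℓ - S) - c) - (G - c * ℓ + c * S - H)|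
      = |S / (ℓ - S)| * |G - c * ℓ + c * S - H| := by
        rw [← abs_mul]
        congr 1
        field_simp
        ring
    _ ≤ 2 * δ * (|G - c * ℓ| + |c| * |S| + |H|) := by gcongr

end SizeBiasedRatio

theorem abs_integral_sub_le_of_ae {Ω : Type*} [MeasurableSpace Ω] {P : Measure Ω}
    [IsProbabilityMeasure P] {X Y : Ω → ℝ} {c : ℝ} (hX : Integrable X P) (hY : Integrable Y P)
    (h : ∀ᵐ ω ∂P, |X ω - c| ≤ Y ω) : |∫ ω, X ω ∂P - c| ≤ ∫ ω, Y ω ∂P := by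
  have hsub : ∫ ω, (X ω - c) ∂P = ∫ ω, X ω ∂P - c := by
    rw [integral_sub hX (integrable_const c), integral_const, probReal_univ, one_smul]
  rw [← hsub]
  exact norm_integral_le_of_norm_le (f := fun ω => X ω - c) hY h

theorem abs_integral_ratio_sub_linearization_le {Ω : Type*} [MeasurableSpace Ω] {P : Measure Ω}
    [IsProbabilityMeasure P] {S H : Ω → ℝ} {ℓ G c δ : ℝ} (hδ : δ ≤ 1 / 2) (hℓ : 0 < ℓ)
    (hR : Integrable (fun ω => (G - H ω) / (ℓ - S ω)) P) (hS : Integrable S P)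
    (hH : Integrable H P) (hS0 : ∀ ω, 0 ≤ S ω) (hH0 : ∀ ω, 0 ≤ H ω)
    (hSℓ : ∀ᵐ ω ∂P, |S ω| ≤ δ * ℓ) :
    |ℓ * (∫ ω, (G - H ω) / (ℓ - S ω) ∂P - c) - (G - c * ℓ + c * ∫ ω, S ω ∂P - ∫ ω, H ω ∂P)| ≤
      2 * δ * (|G - c * ℓ| + |c| * ∫ ω, S ω ∂P + ∫ ω, H ω ∂P) := by
  have hconst (a : ℝ) : Integrable (fun _ => a) P := integrable_const a
  have hlin (a b : ℝ) : Integrable (fun ω => a + b * S ω) P := (hconst a).add (hS.const_mul b)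
  have hintegral_lin (a b : ℝ) : ∫ ω, (a + b * S ω) ∂P = a + b * ∫ ω, S ω ∂P := by
    rw [integral_add (hconst a) (hS.const_mul b), integral_const_mul, integral_const,
      probReal_univ, one_smul]
  have hratio : Integrable (fun ω => ℓ * ((G - H ω) / (ℓ - S ω) - c)) P :=
    (hR.sub (hconst c)).const_mul ℓ
  have hnum : Integrable (fun ω => G - c * ℓ + c * S ω - H ω) P := (hlin _ _).sub hH
  have herror : Integrable (fun ω => 2 * δ * (|G - c * ℓ| + |c| * S ω + H ω)) P :=
    ((hlin _ _).add hH).const_mul _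
  have hintegral_error : ∫ ω, 2 * δ * (|G - c * ℓ| + |c| * S ω + H ω) ∂P =
      2 * δ * (|G - c * ℓ| + |c| * ∫ ω, S ω ∂P + ∫ ω, H ω ∂P) := by
    rw [integral_const_mul, integral_add (hlin _ _) hH, hintegral_lin]
  have hintegral_diff : ∫ ω, (ℓ * ((G - H ω) / (ℓ - S ω) - c) - (G - c * ℓ + c * S ω - H ω)) ∂P =
      ℓ * (∫ ω, (G - H ω) / (ℓ - S ω) ∂P - c) - (G - c * ℓ + c * ∫ ω, S ω ∂P - ∫ ω, H ω ∂P) := by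
    rw [integral_sub hratio hnum, integral_const_mul, integral_sub hR (hconst c),
      integral_sub (hlin _ _) hH, hintegral_lin, integral_const, probReal_univ, one_smul]
  rw [← hintegral_error, ← hintegral_diff, ← Real.norm_eq_abs]
  refine norm_integral_le_of_norm_le herror ?_
  filter_upwards [hSℓ] with ω hω
  refine (abs_ratio_sub_linearization_le hδ hℓ hω).trans_eq ?_
  rw [abs_of_nonneg (hS0 ω), abs_of_nonneg (hH0 ω)]

section MeanAtPosition

variable {n : ℕ} {w : Fin n → ℝ}

theorem abs_integral_apply_sub_le {g : Fin n → ℝ} {k : Fin n} {c δ : ℝ} (hw : ∀ i, 0 < w i)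
    (hδ : δ ≤ 1 / 2) (hS : SubsetSumsLE w k (δ * ∑ i, w i))
    (hH : SubsetSumsLE (fun i => w i * g i) k (δ * ∑ i, w i))
    (hG : |∑ i, w i * g i - c * ∑ i, w i| ≤ δ * ∑ i, w i) :
    |∫ v, g (v k) ∂sbMeasure n w - c| ≤ (4 + 2 * |c|) * δ := by
  have := isProbabilityMeasure_sbMeasure hw
  have hℓ : 0 < ∑ i, w i := Finset.sum_pos (fun i _ => hw i) ⟨k, Finset.mem_univ k⟩
  rw [integral_apply_sbMeasure hw]
  refine (abs_integral_sub_le_of_ae .of_finite (integrable_const ((4 + 2 * |c|) * δ)) ?_).trans_eq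
    (by simp)
  filter_upwards [hS.ae_abs_headSum_le w, hH.ae_abs_headSum_le w] with v hSv hHv
  exact abs_ratio_sub_le hδ hℓ hSv hHv hG

theorem abs_integral_headSum_sub_le {f : Fin n → ℝ} {k : Fin n} {c B : ℝ}
    [IsFiniteMeasure (sbMeasure n w)] (h : ∀ i < k, |∫ v, f (v i) ∂sbMeasure n w - c| ≤ B) :
    |∫ v, headSum f v k ∂sbMeasure n w - k * c| ≤ k * B := by
  have hcard : (k : ℝ) = (Finset.Iio k).card := by rw [Fin.card_Iio]
  simp_rw [headSum]
  rw [integral_finsetSum _ fun _ _ => .of_finite, hcard, ← nsmul_eq_mul, ← nsmul_eq_mul,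
    ← Finset.sum_const, ← Finset.sum_sub_distrib]
  exact (Finset.abs_sum_le_sum_abs _ _).trans
    (Finset.sum_le_card_nsmul _ _ _ fun i hi => h i (Finset.mem_Iio.mp hi))

theorem abs_integral_weight_sub_linearization_le {k : Fin n} {c δ : ℝ} (hw : ∀ i, 0 < w i)
    (hδ : δ ≤ 1 / 2) (hS : SubsetSumsLE w k (δ * ∑ i, w i)) :
    |(∑ i, w i) * (∫ v, w (v k) ∂sbMeasure n w - c) - (∑ i, w i ^ 2 - c * ∑ i, w i
        + c * ∫ v, headSum w v k ∂sbMeasure n w - ∫ v, headSum (w · ^ 2) v k ∂sbMeasure n w)| ≤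
      2 * δ * (|∑ i, w i ^ 2 - c * ∑ i, w i| + |c| * ∫ v, headSum w v k ∂sbMeasure n w
        + ∫ v, headSum (w · ^ 2) v k ∂sbMeasure n w) := by
  have := isProbabilityMeasure_sbMeasure hw
  have hℓ : 0 < ∑ i, w i := Finset.sum_pos (fun i _ => hw i) ⟨k, Finset.mem_univ k⟩
  simp_rw [integral_apply_sbMeasure hw w, ← pow_two]
  exact abs_integral_ratio_sub_linearization_le hδ hℓ .of_finite .of_finite .of_finite
    (fun v => headSum_nonneg (fun i => (hw i).le) v k)
    (fun v => headSum_nonneg (fun i => sq_nonneg (w i)) v k) (hS.ae_abs_headSum_le w)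

/-- The finite-`n` input of the estimate, with relative precision `δ`: the second and third moments
of the weights are about `r` and `C` times their sum, and removing up to `k` items changes the
power sums of the weights by a small proportion of their sum only. -/
structure ApproxMoments (w : Fin n → ℝ) (k r C δ : ℝ) : Prop where
  pos : ∀ i, 0 < w i
  nonneg : 0 ≤ δ
  le_half : δ ≤ 1 / 2
  subset_pow_one : SubsetSumsLE (w · ^ 1) k (δ * ∑ i, w i)
  subset_pow_two : SubsetSumsLE (w · ^ 2) k (δ * ∑ i, w i)
  subset_pow_three : SubsetSumsLE (w · ^ 3) k (δ * ∑ i, w i)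
  sum_sq : |∑ i, w i ^ 2 - r * ∑ i, w i| ≤ δ * ∑ i, w i
  sum_cube : |∑ i, w i ^ 3 - C * ∑ i, w i| ≤ δ * ∑ i, w i

namespace ApproxMoments

variable {K r C δ : ℝ} {k : Fin n}

theorem subset_one (h : ApproxMoments w K r C δ) : SubsetSumsLE w K (δ * ∑ i, w i) := by
  simpa only [pow_one] using h.subset_pow_one

theorem abs_integral_weight_sub_le (h : ApproxMoments w K r C δ) (hk : (k : ℝ) ≤ K) :
    |∫ v, w (v k) ∂sbMeasure n w - r| ≤ (4 + 2 * |r|) * δ := by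
  refine abs_integral_apply_sub_le h.pos h.le_half (h.subset_one.mono hk le_rfl) ?_ ?_
  · simpa only [pow_two] using h.subset_pow_two.mono hk le_rfl
  · simpa only [pow_two] using h.sum_sq

theorem abs_integral_weight_sq_sub_le (h : ApproxMoments w K r C δ) (hk : (k : ℝ) ≤ K) :
    |∫ v, w (v k) ^ 2 ∂sbMeasure n w - C| ≤ (4 + 2 * |C|) * δ := by
  refine abs_integral_apply_sub_le (g := (w · ^ 2)) h.pos h.le_half
    (h.subset_one.mono hk le_rfl) ?_ ?_
  · simpa only [pow_succ'] using h.subset_pow_three.mono hk le_rfl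
  · simpa only [pow_succ'] using h.sum_cube

theorem abs_mul_integral_weight_sub_le (h : ApproxMoments w K r C δ) (hk : (k : ℝ) ≤ K) :
    |(∑ i, w i) * (∫ v, w (v k) ∂sbMeasure n w - r) - k * (r ^ 2 - C)| ≤
      2 * |∑ i, w i ^ 2 - r * ∑ i, w i| + (8 + 8 * |r| + 6 * |r| ^ 2 + 6 * |C|) * δ * k := by
  have := isProbabilityMeasure_sbMeasure h.pos
  have hiK (i : Fin n) (hi : i < k) : (i : ℝ) ≤ K :=
    (Nat.cast_le.mpr (Fin.le_def.mp hi.le)).trans hk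
  have hlin := abs_integral_weight_sub_linearization_le (c := r) h.pos h.le_half
    (h.subset_one.mono hk le_rfl)
  have hS := abs_integral_headSum_sub_le fun i hi => h.abs_integral_weight_sub_le (hiK i hi)
  have hQ := abs_integral_headSum_sub_le (f := (w · ^ 2)) fun i hi =>
    h.abs_integral_weight_sq_sub_le (hiK i hi)
  set D := ∑ i, w i ^ 2 - r * ∑ i, w i
  set S := ∫ v, headSum w v k ∂sbMeasure n w
  set Q := ∫ v, headSum (w · ^ 2) v k ∂sbMeasure n w
  have hmean_le {x c : ℝ} (hx : |x - k * c| ≤ k * ((4 + 2 * |c|) * δ)) : x ≤ k * (2 + 2 * |c|) :=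
    calc x ≤ k * c + k * ((4 + 2 * |c|) * δ) := by linarith [(abs_le.mp hx).2]
      _ ≤ k * |c| + k * ((4 + 2 * |c|) * (1 / 2)) := by
          gcongr
          exacts [le_abs_self c, h.le_half]
      _ = k * (2 + 2 * |c|) := by ring
  have herror : 2 * δ * (|D| + |r| * S + Q) ≤
      |D| + 2 * δ * (|r| * (k * (2 + 2 * |r|)) + k * (2 + 2 * |C|)) :=
    calc 2 * δ * (|D| + |r| * S + Q) = 2 * δ * |D| + 2 * δ * (|r| * S + Q) := by ring
      _ ≤ 1 * |D| + 2 * δ * (|r| * (k * (2 + 2 * |r|)) + k * (2 + 2 * |C|)) := by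
          have hδ := h.nonneg
          gcongr
          exacts [by linarith [h.le_half], hmean_le hS, hmean_le hQ]
      _ = _ := by rw [one_mul]
  have hmain : |D + r * S - Q - k * (r ^ 2 - C)| ≤
      |D| + |r| * (k * ((4 + 2 * |r|) * δ)) + k * ((4 + 2 * |C|) * δ) :=
    calc |D + r * S - Q - k * (r ^ 2 - C)| = |D + r * (S - k * r) - (Q - k * C)| := by ring_nf
      _ ≤ |D| + |r| * |S - k * r| + |Q - k * C| := by
          rw [← abs_mul]; exact (abs_sub _ _).trans (add_le_add_left (abs_add_le _ _) _)
      _ ≤ _ := by gcongr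
  refine (abs_sub_le _ (D + r * S - Q) _).trans ?_
  linarith [hlin.trans herror]

theorem abs_mul_integral_sbW_sub_le {l : ℕ} (h : ApproxMoments w l r C δ) (hl0 : 1 ≤ l)
    (hln : l ≤ n) :
    |(∑ i, w i) * (∫ v, sbW w v l ∂sbMeasure n w - r) - l * (r ^ 2 - C)| ≤
      2 * |∑ i, w i ^ 2 - r * ∑ i, w i| + |r ^ 2 - C|
        + (8 + 8 * |r| + 6 * |r| ^ 2 + 6 * |C|) * δ * l := by
  have hpos : l - 1 < n := by omega
  have hcast : ((l - 1 : ℕ) : ℝ) = l - 1 := Nat.cast_pred hl0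
  have hbound := h.abs_mul_integral_weight_sub_le (k := ⟨l - 1, hpos⟩) (by simp [hcast])
  simp only [hcast] at hbound
  simp_rw [sbW_eq hpos (Nat.one_le_iff_ne_zero.mp hl0)]
  set E := ∫ v, w (v ⟨l - 1, hpos⟩) ∂sbMeasure n w
  have hδ := h.nonneg
  have hδl : (8 + 8 * |r| + 6 * |r| ^ 2 + 6 * |C|) * δ * (l - 1) ≤
      (8 + 8 * |r| + 6 * |r| ^ 2 + 6 * |C|) * δ * l := by
    gcongr
    linarith
  calc |(∑ i, w i) * (E - r) - l * (r ^ 2 - C)|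
      = |((∑ i, w i) * (E - r) - (l - 1) * (r ^ 2 - C)) - (r ^ 2 - C)| := by ring_nf
    _ ≤ |(∑ i, w i) * (E - r) - (l - 1) * (r ^ 2 - C)| + |r ^ 2 - C| := abs_sub _ _
    _ ≤ _ := by linarith

end ApproxMoments

end MeanAtPosition

/-! ### Asymptotics -/

section Asymptotic

variable {w : ∀ n : ℕ, Fin n → ℝ} {r C : ℝ} {a : ℕ → ℝ} {l : ℕ → ℕ}

theorem eventually_approxMoments (hw : ∀ n i, 0 < w n i)
    (hell : (fun n : ℕ => (n : ℝ)) =O[atTop] ell w)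
    (hui : AsympUnifIntegrable fun n i => w n i ^ 3)
    (hsq : (fun n => ∑ i, w n i ^ 2 - r * ell w n) =o[atTop] fun n : ℕ => (n : ℝ))
    (hcube : (fun n => ∑ i, w n i ^ 3 - C * ell w n) =o[atTop] fun n : ℕ => (n : ℝ))
    (hl : (fun n => (l n : ℝ)) =o[atTop] fun n : ℕ => (n : ℝ)) {δ : ℝ} (hδ : 0 < δ)
    (hδ2 : δ ≤ 1 / 2) : ∀ᶠ n in atTop, ApproxMoments (w n) (l n) r C δ := by
  have habs (n : ℕ) : |ell w n| = ∑ i, w n i :=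
    abs_of_nonneg (Finset.sum_nonneg fun i _ => (hw n i).le)
  have hsubset {p : ℕ} (hp : p ≤ 3) :
      ∀ᶠ n in atTop, SubsetSumsLE (fun i => w n i ^ p) (l n) (δ * ∑ i, w n i) := by
    simpa only [habs] using (hui.pow_mono hp).eventually_subsetSumsLE hl hell hδ
  filter_upwards [hsubset (p := 1) (by norm_num), hsubset (p := 2) (by norm_num), hsubset le_rfl,
    (hsq.trans_isBigO hell).bound hδ, (hcube.trans_isBigO hell).bound hδ] with n h1 h2 h3 hsq hcube
  simp only [Real.norm_eq_abs, habs] at hsq hcube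
  exact ⟨hw n, hδ.le, hδ2, h1, h2, h3, hsq, hcube⟩

/-- A `1 = o(a)` term absorbs the shift from the position `l` to the `l - 1` items drawn before. -/
theorem ell_mul_integral_sbW_sub_isLittleO (hw : ∀ n i, 0 < w n i)
    (hell : (fun n : ℕ => (n : ℝ)) =O[atTop] ell w)
    (hui : AsympUnifIntegrable fun n i => w n i ^ 3)
    (hsq : (fun n => ∑ i, w n i ^ 2 - r * ell w n) =o[atTop] a)
    (hcube : (fun n => ∑ i, w n i ^ 3 - C * ell w n) =o[atTop] fun n : ℕ => (n : ℝ))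
    (ha : Tendsto a atTop atTop) (han : a =O[atTop] fun n : ℕ => (n : ℝ)) (hl0 : ∀ n, 1 ≤ l n)
    (hl : (fun n => (l n : ℝ)) =o[atTop] fun n : ℕ => (n : ℝ)) :
    (fun n => ell w n * (∫ v, sbW (w n) v (l n) ∂sbMeasure n (w n) - r) - l n * (r ^ 2 - C))
      =o[atTop] fun n => (l n : ℝ) + a n := by
  rw [isLittleO_iff]
  intro ε hε
  set K := 8 + 8 * |r| + 6 * |r| ^ 2 + 6 * |C|
  have hK : 0 < K := by positivity
  have hsmall : (fun n => 2 * |∑ i, w n i ^ 2 - r * ell w n| + |r ^ 2 - C|) =o[atTop] a :=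
    (hsq.abs_left.const_mul_left 2).add
      (isLittleO_const_left.mpr (.inr (tendsto_norm_atTop_atTop.comp ha)))
  filter_upwards [eventually_approxMoments hw hell hui (hsq.trans_isBigO han) hcube hl
      (δ := min (1 / 2) (ε / K)) (by positivity) (min_le_left _ _),
    hsmall.bound hε, ha.eventually_ge_atTop 0, hl.bound one_pos] with n happrox hsmall han hln
  rw [Real.norm_of_nonneg (by positivity), Real.norm_of_nonneg han] at hsmall
  rw [RCLike.norm_natCast, RCLike.norm_natCast, one_mul, Nat.cast_le] at hln
  rw [Real.norm_eq_abs, Real.norm_of_nonneg (by positivity)]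
  have hδ : K * min (1 / 2) (ε / K) * l n ≤ ε * l n :=
    calc K * min (1 / 2) (ε / K) * l n ≤ K * (ε / K) * l n := by
          gcongr
          exact min_le_right _ _
      _ = ε * l n := by field_simp
  calc |ell w n * (∫ v, sbW (w n) v (l n) ∂sbMeasure n (w n) - r) - l n * (r ^ 2 - C)|
      ≤ 2 * |∑ i, w n i ^ 2 - r * ell w n| + |r ^ 2 - C| + K * min (1 / 2) (ε / K) * l n :=
        happrox.abs_mul_integral_sbW_sub_le (hl0 n) hln
    _ ≤ ε * (l n + a n) := by linarith

end Asymptotic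

/-! ### Conditions (C) -/

theorem integral_pos_of_ae_pos {Ω : Type*} [MeasurableSpace Ω] {μ : Measure Ω} [NeZero μ]
    {f : Ω → ℝ} (hf : Integrable f μ) (hpos : ∀ᵐ x ∂μ, 0 < f x) : 0 < ∫ x, f x ∂μ := by
  have hnonneg : 0 ≤ᵐ[μ] f := hpos.mono fun _ => le_of_lt
  refine (integral_nonneg_of_ae hnonneg).lt_of_ne fun h0 => ?_
  obtain ⟨x, hx, hx0⟩ :=
    (hpos.and ((integral_eq_zero_iff_of_nonneg_ae hnonneg hf).mp h0.symm)).exists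
  exact hx.ne' hx0

theorem tendsto_natCast_rpow_two_thirds :
    Tendsto (fun n : ℕ => (n : ℝ) ^ ((2 : ℝ) / 3)) atTop atTop :=
  (tendsto_rpow_atTop (by norm_num)).comp tendsto_natCast_atTop_atTop

theorem rpow_isLittleO_rpow_atTop {p q : ℝ} (hpq : p < q) :
    (fun x : ℝ => x ^ p) =o[atTop] fun x => x ^ q := by
  refine isLittleO_of_tendsto' ?_ ((tendsto_rpow_neg_atTop (sub_pos.mpr hpq)).congr' ?_)
  · filter_upwards [eventually_gt_atTop 0] with x hx h0
    exact absurd h0 (Real.rpow_pos_of_pos hx q).ne'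
  · filter_upwards [eventually_gt_atTop 0] with x hx
    rw [← Real.rpow_sub hx, neg_sub]

theorem natCast_rpow_two_thirds_isLittleO :
    (fun n : ℕ => (n : ℝ) ^ ((2 : ℝ) / 3)) =o[atTop] fun n : ℕ => (n : ℝ) := by
  simpa only [Function.comp_def, Real.rpow_one] using
    (rpow_isLittleO_rpow_atTop (by norm_num : (2 : ℝ) / 3 < 1)).comp_tendsto
      tendsto_natCast_atTop_atTop

namespace CondC

variable {w : ∀ n : ℕ, Fin n → ℝ} {μ : Measure ℝ}

theorem integrable_id (hC : CondC w μ) : Integrable (fun x => x) μ := by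
  have := hC.isProb
  refine ((integrable_const 1).add hC.int3).mono' aestronglyMeasurable_id ?_
  filter_upwards [hC.pos] with x hx
  simpa [abs_of_pos hx] using pow_le_one_add_pow hx.le (by norm_num : 1 ≤ 3)

theorem mean_pos (hC : CondC w μ) : 0 < ∫ x, x ∂μ := by
  have := hC.isProb
  exact integral_pos_of_ae_pos hC.integrable_id hC.pos

theorem ell_isEquivalent (hC : CondC w μ) :
    ell w ~[atTop] fun n : ℕ => (∫ x, x ∂μ) * (n : ℝ) :=
  (hC.ell_asymp.trans natCast_rpow_two_thirds_isLittleO).const_mul_right hC.mean_pos.ne'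

theorem natCast_isBigO_ell (hC : CondC w μ) : (fun n : ℕ => (n : ℝ)) =O[atTop] ell w :=
  (isBigO_self_const_mul hC.mean_pos.ne' _ _).trans hC.ell_isEquivalent.isBigO_symm

theorem sum_sq_sub_ell_isLittleO (hC : CondC w μ) :
    (fun n => ∑ i, w n i ^ 2 - 1 * ell w n) =o[atTop] fun n : ℕ => (n : ℝ) ^ ((2 : ℝ) / 3) := by
  refine (hC.sq_asymp.sub hC.ell_asymp).congr_left fun n => ?_
  rw [hC.moment_eq]
  ring

theorem sum_cube_sub_isLittleO (hC : CondC w μ) :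
    (fun n : ℕ => ∑ i, w n i ^ 3 - (∫ x, x ^ 3 ∂μ) * n) =o[atTop] fun n : ℕ => (n : ℝ) :=
  hC.cube_asymp.trans ((isLittleO_const_id_atTop _).comp_tendsto tendsto_natCast_atTop_atTop)

theorem sum_cube_sub_ell_isLittleO (hC : CondC w μ) :
    (fun n => ∑ i, w n i ^ 3 - Cconst μ * ell w n) =o[atTop] fun n : ℕ => (n : ℝ) := by
  have hell := (hC.ell_asymp.trans natCast_rpow_two_thirds_isLittleO).const_mul_left (Cconst μ)
  have hmean := hC.mean_pos.ne'
  refine (hC.sum_cube_sub_isLittleO.sub hell).congr_left fun n => ?_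
  rw [Cconst]
  field_simp
  ring

theorem tendsto_sum_cube_div (hC : CondC w μ) :
    Tendsto (fun n : ℕ => (∑ i, w n i ^ 3) / (n : ℝ)) atTop (𝓝 (∫ x, x ^ 3 ∂μ)) := by
  have herror := hC.sum_cube_sub_isLittleO.tendsto_div_nhds_zero.add_const (∫ x, x ^ 3 ∂μ)
  rw [zero_add] at herror
  refine herror.congr' ?_
  filter_upwards [eventually_gt_atTop 0] with n hn
  field_simp
  ring

theorem asympUnifIntegrable_cube (hC : CondC w μ) :
    AsympUnifIntegrable fun n i => w n i ^ 3 := by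
  have habs_ae : (fun x : ℝ => |x| ^ 3) =ᵐ[μ] fun x => x ^ 3 :=
    hC.pos.mono fun x hx => by simp [abs_of_pos hx]
  have habs (n : ℕ) (i : Fin n) : |w n i| ^ 3 = w n i ^ 3 := by rw [abs_of_pos (hC.w_pos n i)]
  have hui := asympUnifIntegrable_of_tendsto (w := w) (h := fun x => |x| ^ 3) (by fun_prop)
    (fun x => by positivity) (hC.int3.congr habs_ae.symm) hC.weak
  simp only [habs, integral_congr_ae habs_ae] at hui
  exact hui hC.tendsto_sum_cube_div

end CondC

theorem refined_mean_size_biased_weight_general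
    {w : ∀ n : ℕ, Fin n → ℝ} {r C : ℝ} {a : ℕ → ℝ} {l : ℕ → ℕ} (hw : ∀ n i, 0 < w n i)
    (hell : (fun n : ℕ => (n : ℝ)) =O[atTop] ell w)
    (hui : AsympUnifIntegrable fun n i => w n i ^ 3)
    (hsq : (fun n => ∑ i, w n i ^ 2 - r * ell w n) =o[atTop] a)
    (hcube : (fun n => ∑ i, w n i ^ 3 - C * ell w n) =o[atTop] fun n : ℕ => (n : ℝ))
    (ha : Tendsto a atTop atTop) (han : a =O[atTop] fun n : ℕ => (n : ℝ)) (hl0 : ∀ n, 1 ≤ l n)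
    (hl : (fun n => (l n : ℝ)) =o[atTop] fun n : ℕ => (n : ℝ)) :
    (fun n => ∫ v, sbW (w n) v (l n) ∂sbMeasure n (w n) - r - l n / ell w n * (r ^ 2 - C))
      =o[atTop] fun n => (l n + a n) / n := by
  have hinv : (fun n => (ell w n)⁻¹) =O[atTop] fun n : ℕ => (n : ℝ)⁻¹ :=
    hell.inv_rev <| (eventually_gt_atTop 0).mono fun n hn h0 =>
      absurd (Nat.cast_eq_zero.mp h0) hn.ne'
  refine ((ell_mul_integral_sbW_sub_isLittleO hw hell hui hsq hcube ha han hl0 hl).mul_isBigO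
    hinv).congr' ?_ (.of_forall fun n => rfl)
  filter_upwards [eventually_gt_atTop 0] with n hn
  have hpos : 0 < ell w n := Finset.sum_pos (fun i _ => hw n i) ⟨⟨0, hn⟩, Finset.mem_univ _⟩
  field_simp

/-- Lemma of the paper: the refined estimate
`E[w_{v(l)}] = 1 + (l/ℓ_n)(1 − C) + o((l + n^{2/3})/n)` for `l = o(n)`. -/
theorem refined_mean_size_biased_weight
    (w : ∀ n : ℕ, Fin n → ℝ) (μ : Measure ℝ) (hC : CondC w μ)
    (l : ℕ → ℕ) (hl0 : ∀ n, 1 ≤ l n)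
    (hl : (fun n => (l n : ℝ)) =o[atTop] fun n : ℕ => (n : ℝ)) :
    (fun n => (∫ ω, sbW (w n) ω (l n) ∂sbMeasure n (w n)) - 1
        - ((l n : ℝ) / ell w n) * (1 - Cconst μ)) =o[atTop]
      fun n : ℕ => ((l n : ℝ) + (n : ℝ) ^ ((2 : ℝ) / 3)) / (n : ℝ) := by
  simpa only [one_pow] using refined_mean_size_biased_weight_general hC.w_pos hC.natCast_isBigO_ell
    hC.asympUnifIntegrable_cube hC.sum_sq_sub_ell_isLittleO hC.sum_cube_sub_ell_isLittleO
    tendsto_natCast_rpow_two_thirds natCast_rpow_two_thirds_isLittleO.isBigO hl0 hl
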